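/- Let G = ⟨a, b; r⟩ be a two-generator group with infinite abelianization and only finitely many Nielsen equivalence classes of generating pairs in the T-system of (a,b). Then Out(G) is residually finite; moreover, if r is not contained in F(a,b)′ then Out(G) is virtually cyclic. -/

import Mathlib

def innAut (G : Type*) [Group G] : Subgroup (MulAut G) := (MulAut.conj : G →* MulAut G).range

instance innAut_normal (G : Type*) [Group G] : (innAut G).Normal := by
  constructor
  rintro x ⟨g, rfl⟩ f
  refine ⟨f g, ?_⟩
  ext h
  simp [MulAut.conj_apply, MulAut.mul_apply, mul_assoc]

abbrev Out (G : Type*) [Group G] := MulAut G ⧸ innAut G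

def ResiduallyFinite (G : Type*) [Group G] : Prop :=
  ∀ g : G, g ≠ 1 → ∃ N : Subgroup G, N.Normal ∧ Finite (G ⧸ N) ∧ g ∉ N

noncomputable def expSum (i : Fin 2) : FreeGroup (Fin 2) →* Multiplicative ℤ :=
  FreeGroup.lift (fun j => Multiplicative.ofAdd (if j = i then (1 : ℤ) else 0))

noncomputable def σ (i : Fin 2) (w : FreeGroup (Fin 2)) : ℤ :=
  Multiplicative.toAdd (expSum i w)

def NielsenEquiv {G : Type*} [Group G] {n : ℕ} (Y Z : Fin n → G) : Prop :=
  ∃ φ : FreeGroup (Fin n) ≃* FreeGroup (Fin n),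
    ∀ i, FreeGroup.lift Y (φ (FreeGroup.of i)) = Z i

def SameTSystem {G : Type*} [Group G] {n : ℕ} (Y Z : Fin n → G) : Prop :=
  ∃ ψ : G ≃* G, NielsenEquiv (fun i => ψ (Y i)) Z

namespace FreeGroup

section FirstLetter

variable {α : Type*} [DecidableEq α]

/-- The first letter of the reduced word of `g`, if `g ≠ 1`. -/
def firstLetter (g : FreeGroup α) : Option (α × Bool) := g.toWord.head?

theorem firstLetter_eq_none {g : FreeGroup α} : firstLetter g = none ↔ g = 1 := by
  simp [firstLetter]

theorem firstLetter_inv (g : FreeGroup α) :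
    firstLetter g⁻¹ = g.toWord.getLast?.map fun l => (l.1, !l.2) := by
  simp [firstLetter, toWord_inv, invRev]

theorem toWord_mul_of_ne {g h : FreeGroup α} (hgh : firstLetter g⁻¹ ≠ firstLetter h) :
    (g * h).toWord = g.toWord ++ h.toWord := by
  rw [toWord_mul]
  refine IsReduced.reduce_eq ?_
  refine List.isChain_append.2 ⟨isReduced_toWord, isReduced_toWord, ?_⟩
  intro x hx y hy h1
  by_contra h2
  apply hgh
  rw [firstLetter_inv, firstLetter, Option.mem_def.1 hx, Option.mem_def.1 hy]
  obtain ⟨x1, x2⟩ := x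
  obtain ⟨y1, y2⟩ := y
  simp only at h1 h2
  subst h1
  cases x2 <;> cases y2 <;> simp_all

theorem norm_mul_of_ne {g h : FreeGroup α} (hgh : firstLetter g⁻¹ ≠ firstLetter h) :
    norm (g * h) = norm g + norm h := by
  simp [norm, toWord_mul_of_ne hgh]

theorem firstLetter_mul_of_ne {g h : FreeGroup α} (hgh : firstLetter g⁻¹ ≠ firstLetter h)
    (hg : g ≠ 1) : firstLetter (g * h) = firstLetter g := by
  have : g.toWord ≠ [] := by simpa using hg
  simp [firstLetter, toWord_mul_of_ne hgh, List.head?_append_of_ne_nil _ this]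

theorem toWord_eq_cons {g : FreeGroup α} {l : α × Bool} (hg : firstLetter g = some l) :
    g.toWord = l :: ((mk [l])⁻¹ * g).toWord := by
  obtain ⟨t, ht⟩ : ∃ t, g.toWord = l :: t := by
    rw [firstLetter] at hg
    exact ⟨_, (List.cons_head?_tail (Option.mem_def.2 hg)).symm⟩
  have hg' : g = mk [l] * mk t := by
    rw [mul_mk, ← mk_toWord (x := g), ht]; rfl
  have hred : IsReduced (l :: t) := ht ▸ isReduced_toWord
  have : ((mk [l])⁻¹ * g).toWord = t := by
    rw [hg', inv_mul_cancel_left, toWord_mk]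
    exact IsReduced.reduce_eq (List.IsChain.tail hred)
  rw [this, ht]

theorem norm_inv_letter_mul {g : FreeGroup α} {l : α × Bool} (hg : firstLetter g = some l) :
    norm ((mk [l])⁻¹ * g) + 1 = norm g := by
  simp [norm, toWord_eq_cons hg]

theorem norm_mul_letter {g : FreeGroup α} {l : α × Bool} (hg : firstLetter g⁻¹ = some l) :
    norm (g * mk [l]) + 1 = norm g := by
  have := norm_inv_letter_mul hg
  rw [← mul_inv_rev, norm_inv_eq, norm_inv_eq] at this
  exact this

theorem norm_letter (l : α × Bool) : norm (mk [l]) = 1 := by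
  simp [norm]

theorem one_le_norm {g : FreeGroup α} (hg : g ≠ 1) : 1 ≤ norm g :=
  Nat.one_le_iff_ne_zero.2 fun h => hg (norm_eq_zero.1 h)

theorem firstLetter_pow_succ (x : FreeGroup α) (n : ℕ) :
    firstLetter (x ^ (n + 1)) = firstLetter x := by
  have h := reduceCyclically.conj_conjugator_reduceCyclically x.toWord
  rw [firstLetter, firstLetter, toWord_pow,
    reduceCyclically.reduce_flatten_replicate_succ isReduced_toWord]
  conv_rhs => rw [← h]
  cases reduceCyclically x.toWord <;>
    simp [List.replicate_succ, List.head?_append]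

theorem firstLetter_zpow (x : FreeGroup α) {n : ℤ} (hn : n ≠ 0) :
    firstLetter (x ^ n) = firstLetter x ∨ firstLetter (x ^ n) = firstLetter x⁻¹ := by
  rcases n with n | n
  · obtain ⟨m, rfl⟩ := Nat.exists_eq_succ_of_ne_zero (n := n) (by rintro rfl; simp at hn)
    left
    rw [Int.ofNat_eq_natCast, zpow_natCast]
    exact firstLetter_pow_succ x m
  · right
    rw [zpow_negSucc, ← inv_pow]
    exact firstLetter_pow_succ _ n

end FirstLetter

/-! ### Alternating products of powers of two elements without cancellation -/

/-- Products alternating between nontrivial powers of `t false` and `t true`, starting with a power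
of `t i` (or empty). -/
inductive AltProd {G : Type*} [Group G] (t : Bool → G) : Bool → G → Prop
  | one (i : Bool) : AltProd t i 1
  | cons (i : Bool) (n : ℤ) (h : G) (hn : n ≠ 0) (hh : AltProd t (!i) h) : AltProd t i (t i ^ n * h)

theorem AltProd.zpow_mul {G : Type*} [Group G] {t : Bool → G} {i : Bool} {g : G}
    (hg : AltProd t i g) (j : Bool) (n : ℤ) : ∃ k, AltProd t k (t j ^ n * g) := by
  by_cases hn : n = 0
  · subst hn
    exact ⟨i, by simpa using hg⟩
  by_cases hij : i = !j
  · subst hij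
    exact ⟨j, .cons j n g hn hg⟩
  obtain rfl : i = j := by revert hij; cases i <;> cases j <;> simp
  cases hg with
  | one => exact ⟨i, .cons i n 1 hn (.one _)⟩
  | cons _ m h hm hh =>
    rw [← mul_assoc, ← zpow_add]
    by_cases h0 : n + m = 0
    · exact ⟨!i, by simpa [h0] using hh⟩
    · exact ⟨i, .cons i _ h h0 hh⟩

theorem exists_altProd {G : Type*} [Group G] {t : Bool → G}
    (ht : Subgroup.closure (Set.range t) = ⊤) (g : G) : ∃ i, AltProd t i g := by
  have hg : g ∈ Subgroup.closure (Set.range t) := ht ▸ Subgroup.mem_top g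
  induction hg using Subgroup.closure_induction_left with
  | one => exact ⟨true, .one _⟩
  | mul_left x hx y hy ih =>
    obtain ⟨j, rfl⟩ := hx
    obtain ⟨i, hi⟩ := ih
    simpa using hi.zpow_mul j 1
  | inv_mul_cancel x hx y hy ih =>
    obtain ⟨j, rfl⟩ := hx
    obtain ⟨i, hi⟩ := ih
    simpa using hi.zpow_mul j (-1)

section NoCancel

variable {α : Type*} [DecidableEq α]

/-- No letter cancels in a product of one of `x`, `x⁻¹` and one of `y`, `y⁻¹`. -/
def NoCancel (x y : FreeGroup α) : Prop :=
  firstLetter x ≠ firstLetter y ∧ firstLetter x ≠ firstLetter y⁻¹ ∧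
    firstLetter x⁻¹ ≠ firstLetter y ∧ firstLetter x⁻¹ ≠ firstLetter y⁻¹

theorem NoCancel.symm {x y : FreeGroup α} (h : NoCancel x y) : NoCancel y x :=
  ⟨h.1.symm, h.2.2.1.symm, h.2.1.symm, h.2.2.2.symm⟩

theorem AltProd.norm_bound {t : Bool → FreeGroup α} (ht : ∀ i, t i ≠ 1)
    (hc : ∀ i, NoCancel (t i) (t !i)) {i : Bool} {g : FreeGroup α} (hg : AltProd t i g) :
    g = 1 ∨ (g ≠ 1 ∧ (firstLetter g = firstLetter (t i) ∨ firstLetter g = firstLetter (t i)⁻¹) ∧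
      (2 ≤ norm g ∨ ∃ n : ℤ, g = t i ^ n)) := by
  induction hg with
  | one => exact .inl rfl
  | cons i n h hn hh ih =>
    right
    have hf := firstLetter_zpow (t i) hn
    have hpow : t i ^ n ≠ 1 := by
      rw [Ne, ← firstLetter_eq_none]
      rcases hf with e | e <;> rw [e, firstLetter_eq_none]
      exacts [ht i, inv_ne_one.2 (ht i)]
    rcases ih with rfl | ⟨hne, hfl, -⟩
    · exact ⟨by simpa using hpow, by simpa using hf, .inr ⟨n, by simp⟩⟩
    · have hf' : firstLetter (t i ^ n)⁻¹ = firstLetter (t i) ∨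
          firstLetter (t i ^ n)⁻¹ = firstLetter (t i)⁻¹ := by
        rw [← zpow_neg]
        exact firstLetter_zpow (t i) (neg_ne_zero.2 hn)
      have hnc : firstLetter (t i ^ n)⁻¹ ≠ firstLetter h := by
        obtain ⟨h1, h2, h3, h4⟩ := hc i
        rcases hf' with e | e <;> rcases hfl with e' | e' <;> rw [e, e'] <;> assumption
      have hnorm := norm_mul_of_ne hnc
      have := one_le_norm hpow
      have := one_le_norm hne
      refine ⟨fun h1 => ?_, ?_, .inl (by omega)⟩
      · rw [h1, norm_one] at hnorm
        omega
      · rw [firstLetter_mul_of_ne hnc hpow]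
        exact hf

end NoCancel

section Theta

/-- Alternating products `t i₁ * (t i₂)⁻¹ * t i₃ * ⋯` with `iₖ ≠ iₖ₊₁`, ending in an inverse,
and starting with `t i` if `s = true`, with `(t i)⁻¹` if `s = false`. -/
inductive ThetaPath {G ι : Type*} [Group G] (t : ι → G) : Bool → ι → G → Prop
  | single (i : ι) : ThetaPath t false i (t i)⁻¹
  | pos (i j : ι) (h : G) (hij : i ≠ j) (hh : ThetaPath t false j h) : ThetaPath t true i (t i * h)
  | neg (i j : ι) (h : G) (hij : i ≠ j) (hh : ThetaPath t true j h) :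
    ThetaPath t false i ((t i)⁻¹ * h)

theorem ThetaPath.norm_bound {α ι : Type*} [DecidableEq α] {t : ι → FreeGroup α}
    (ht : ∀ i, t i ≠ 1) (hf : ∀ i j, i ≠ j → firstLetter (t i) ≠ firstLetter (t j))
    (hl : ∀ i j, i ≠ j → firstLetter (t i)⁻¹ ≠ firstLetter (t j)⁻¹) {s : Bool} {i : ι}
    {g : FreeGroup α} (hg : ThetaPath t s i g) :
    (s = false → 1 ≤ norm g ∧ firstLetter g = firstLetter (t i)⁻¹) ∧
      (s = true → 2 ≤ norm g ∧ firstLetter g = firstLetter (t i)) := by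
  induction hg with
  | single i => exact ⟨fun _ => ⟨one_le_norm (inv_ne_one.2 (ht i)), rfl⟩, by simp⟩
  | pos i j h hij hh ih =>
    obtain ⟨h1, h2⟩ := ih.1 rfl
    have hne := h2 ▸ hl i j hij
    have := one_le_norm (ht i)
    exact ⟨by simp, fun _ => ⟨by rw [norm_mul_of_ne hne]; omega, firstLetter_mul_of_ne hne (ht i)⟩⟩
  | neg i j h hij hh ih =>
    obtain ⟨h1, h2⟩ := ih.2 rfl
    have hne : firstLetter (t i)⁻¹⁻¹ ≠ firstLetter h := by
      rw [inv_inv, h2]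
      exact hf i j hij
    have := one_le_norm (inv_ne_one.2 (ht i))
    exact ⟨fun _ => ⟨by rw [norm_mul_of_ne hne]; omega,
      firstLetter_mul_of_ne hne (inv_ne_one.2 (ht i))⟩, by simp⟩

theorem exists_thetaPath {G ι : Type*} [Group G] {t : ι → G}
    (ht : Subgroup.closure (Set.range fun p : ι × ι => t p.1 * (t p.2)⁻¹) = ⊤) (g : G) :
    g = 1 ∨ ∃ i, ThetaPath t true i g := by
  have step : ∀ (i j : ι) (g : G), (g = 1 ∨ ∃ i, ThetaPath t true i g) →
      (t i * (t j)⁻¹ * g = 1 ∨ ∃ k, ThetaPath t true k (t i * (t j)⁻¹ * g)) := by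
    intro i j g hg
    have h1 : ∃ k, ThetaPath t false k ((t j)⁻¹ * g) := by
      rcases hg with rfl | ⟨k, hk⟩
      · exact ⟨j, by simpa using ThetaPath.single j⟩
      · by_cases hjk : j = k
        · subst hjk
          cases hk with
          | pos _ l h _ hh => exact ⟨l, by simpa using hh⟩
        · exact ⟨j, .neg j k g hjk hk⟩
    obtain ⟨k, hk⟩ := h1
    rw [mul_assoc]
    by_cases hik : i = k
    · subst hik
      generalize hw : (t j)⁻¹ * g = w at hk
      cases hk with
      | single => left; simp
      | neg _ l h _ hh => exact .inr ⟨l, by simpa using hh⟩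
    · exact .inr ⟨i, .pos i k _ hik hk⟩
  have hg : g ∈ Subgroup.closure (Set.range fun p : ι × ι => t p.1 * (t p.2)⁻¹) :=
    ht ▸ Subgroup.mem_top g
  induction hg using Subgroup.closure_induction_left with
  | one => exact .inl rfl
  | mul_left x hx y hy ih =>
    obtain ⟨⟨i, j⟩, rfl⟩ := hx
    exact step i j y ih
  | inv_mul_cancel x hx y hy ih =>
    obtain ⟨⟨i, j⟩, rfl⟩ := hx
    simpa using step j i y ih

end Theta

/-! ### Sign-coherent generating triples of the free group of rank two -/

section Generates

variable {G ι : Type*} [Group G]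

/-- The loops `t i * (t j)⁻¹` of the theta graph with edges labelled by `t` generate `G`. -/
def ThetaGenerates (t : ι → G) : Prop :=
  Subgroup.closure (Set.range fun p : ι × ι => t p.1 * (t p.2)⁻¹) = ⊤

theorem ThetaGenerates.shift {t : ι → G} (ht : ThetaGenerates t) (g h : G) :
    ThetaGenerates fun i => g * t i * h := by
  have := congrArg (Subgroup.map (MulAut.conj g).toMonoidHom) ht
  rw [MonoidHom.map_closure, Subgroup.map_top_of_surjective _ (MulAut.conj g).surjective,
    ← Set.range_comp] at this
  rw [ThetaGenerates, ← this]
  congr 2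
  ext p
  simp [mul_assoc]

theorem ThetaGenerates.comp {κ : Type*} {t : ι → G} (ht : ThetaGenerates t) (e : κ ≃ ι) :
    ThetaGenerates (t ∘ e) := by
  rw [ThetaGenerates, ← ht, ← (e.prodCongr e).surjective.range_comp]
  rfl

theorem thetaGenerates_pair {x y : G} :
    ThetaGenerates ![x, y, 1] ↔ Subgroup.closure {x, y} = ⊤ := by
  have h : Subgroup.closure (Set.range fun p : Fin 3 × Fin 3 => ![x, y, 1] p.1 * (![x, y, 1] p.2)⁻¹)
      = Subgroup.closure {x, y} := by
    have hx : x ∈ Subgroup.closure {x, y} := Subgroup.subset_closure (by simp)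
    have hy : y ∈ Subgroup.closure {x, y} := Subgroup.subset_closure (by simp)
    apply le_antisymm
    · rw [Subgroup.closure_le]
      rintro _ ⟨⟨i, j⟩, rfl⟩
      have hm : ∀ i, ![x, y, 1] i ∈ Subgroup.closure {x, y} := by
        intro i
        fin_cases i
        exacts [hx, hy, one_mem _]
      exact mul_mem (hm i) (inv_mem (hm j))
    · rw [Subgroup.closure_le]
      rintro _ (rfl | rfl)
      · exact Subgroup.subset_closure ⟨(0, 2), by simp⟩
      · exact Subgroup.subset_closure ⟨(1, 2), by simp⟩
  rw [ThetaGenerates, h]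

theorem closure_pair_inv_right {x y : G} (h : Subgroup.closure {x, y} = ⊤) :
    Subgroup.closure {x, y⁻¹} = ⊤ := by
  rw [← top_le_iff, ← h, Subgroup.closure_le]
  rintro _ (rfl | rfl)
  · exact Subgroup.subset_closure (by simp)
  · exact inv_mem_iff.1 (Subgroup.subset_closure (by simp))

theorem closure_pair_conj {x y : G} (h : Subgroup.closure {x, y} = ⊤) (g : G) :
    Subgroup.closure {g * x * g⁻¹, g * y * g⁻¹} = ⊤ := by
  have := congrArg (Subgroup.map (MulAut.conj g).toMonoidHom) h
  rw [MonoidHom.map_closure, Subgroup.map_top_of_surjective _ (MulAut.conj g).surjective] at this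
  simpa [Set.image_pair] using this

theorem ThetaGenerates.injective {t : Fin 3 → FreeGroup (Fin 2)} (ht : ThetaGenerates t) :
    Function.Injective t := by
  intro i j hij
  by_contra hne
  have third : ∀ i j : Fin 3, i ≠ j → ∃ k, k ≠ i ∧ k ≠ j ∧ ∀ l, l = i ∨ l = j ∨ l = k := by decide
  obtain ⟨k, hk⟩ := third i j hne
  have hle : (⊤ : Subgroup (FreeGroup (Fin 2))) ≤ Subgroup.zpowers (t i * (t k)⁻¹) := by
    rw [← ht, Subgroup.closure_le]
    have h1 : t i * (t k)⁻¹ ∈ Subgroup.zpowers (t i * (t k)⁻¹) := Subgroup.mem_zpowers _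
    have h2 := inv_mem h1
    rw [mul_inv_rev, inv_inv] at h2
    rintro _ ⟨⟨a, b⟩, rfl⟩
    rcases hk.2.2 a with rfl | rfl | rfl <;> rcases hk.2.2 b with rfl | rfl | rfl <;>
      simp_all
  obtain ⟨m, hm⟩ := Subgroup.mem_zpowers_iff.1 (hle (Subgroup.mem_top (of 0)))
  obtain ⟨n, hn⟩ := Subgroup.mem_zpowers_iff.1 (hle (Subgroup.mem_top (of 1)))
  have hcomm : (of 0 * of 1 : FreeGroup (Fin 2)) = of 1 * of 0 := by
    rw [← hm, ← hn, ← zpow_add, ← zpow_add, add_comm]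
  revert hcomm
  decide

end Generates

section Sign

/-- All letters of `g` have the sign prescribed by `s`. -/
def IsPos (s : Fin 2 → Bool) (g : FreeGroup (Fin 2)) : Prop :=
  ∀ l ∈ g.toWord, l.2 = s l.1

variable {s : Fin 2 → Bool} {g h : FreeGroup (Fin 2)}

theorem isPos_one : IsPos s 1 := by simp [IsPos]

theorem isPos_inv : IsPos (fun i => !s i) g⁻¹ ↔ IsPos s g := by
  simp [IsPos, toWord_inv, invRev]
  tauto

theorem IsPos.mul (hg : IsPos s g) (hh : IsPos s h) : IsPos s (g * h) := fun l hl =>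
  (List.mem_append.1 ((toWord_mul_sublist g h).subset hl)).elim (hg l) (hh l)

theorem isPos_letter {l : Fin 2 × Bool} : IsPos s (mk [l]) ↔ l.2 = s l.1 := by
  simp [IsPos]

theorem IsPos.of_firstLetter (hg : IsPos s g) {l : Fin 2 × Bool} (hl : firstLetter g = some l) :
    IsPos s (mk [l]) ∧ IsPos s ((mk [l])⁻¹ * g) := by
  have := toWord_eq_cons hl
  constructor
  · rw [isPos_letter]
    exact hg l (by simp [this])
  · exact fun m hm => hg m (by rw [this]; exact List.mem_cons_of_mem _ hm)

theorem IsPos.of_firstLetter_inv (hg : IsPos s g) {l : Fin 2 × Bool}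
    (hl : firstLetter g⁻¹ = some l) :
    IsPos s (mk [l])⁻¹ ∧ IsPos s (g * mk [l]) := by
  have := (isPos_inv.2 hg).of_firstLetter hl
  rw [← isPos_inv (g := (mk [l])⁻¹), ← isPos_inv (g := g * mk [l])]
  simpa using this

theorem IsPos.firstLetter_inv_ne (hg : IsPos s g) (hh : IsPos s h) (hne : g ≠ 1) :
    firstLetter g⁻¹ ≠ firstLetter h := by
  intro he
  cases hl : firstLetter h with
  | none => exact hne (inv_eq_one.1 (firstLetter_eq_none.1 (he.trans hl)))
  | some l =>
    have h1 := (hh.of_firstLetter hl).1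
    have h2 := ((isPos_inv.2 hg).of_firstLetter (he.trans hl)).1
    rw [isPos_letter] at h1 h2
    rw [h1] at h2
    simp at h2

/-- Either `g` or `g⁻¹` only has letters with the sign prescribed by `s`. -/
def IsCoherent (s : Fin 2 → Bool) (g : FreeGroup (Fin 2)) : Prop := IsPos s g ∨ IsPos s g⁻¹

theorem isCoherent_inv : IsCoherent s g⁻¹ ↔ IsCoherent s g := by
  simp [IsCoherent, or_comm]

/-- Up to a common conjugation, all loops of the theta graph labelled by `t` are sign-coherent. -/
def ThetaCoherent (t : Fin 3 → FreeGroup (Fin 2)) : Prop :=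
  ∃ (g : FreeGroup (Fin 2)) (s : Fin 2 → Bool), ∀ i j, IsCoherent s (g * (t i * (t j)⁻¹) * g⁻¹)

theorem ThetaCoherent.of_shift {t : Fin 3 → FreeGroup (Fin 2)} (g h : FreeGroup (Fin 2))
    (ht : ThetaCoherent fun i => g * t i * h) : ThetaCoherent t := by
  obtain ⟨k, s, hk⟩ := ht
  refine ⟨k * g, s, fun i j => ?_⟩
  convert hk i j using 1
  group

theorem ThetaCoherent.of_comp {t : Fin 3 → FreeGroup (Fin 2)} (e : Fin 3 ≃ Fin 3)
    (ht : ThetaCoherent (t ∘ e)) : ThetaCoherent t := by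
  obtain ⟨g, s, h⟩ := ht
  exact ⟨g, s, fun i j => by simpa using h (e.symm i) (e.symm j)⟩

theorem thetaCoherent_of_isCoherent {x y z : FreeGroup (Fin 2)} (h1 : IsCoherent s (x * y⁻¹))
    (h2 : IsCoherent s (x * z⁻¹)) (h3 : IsCoherent s (y * z⁻¹)) : ThetaCoherent ![x, y, z] := by
  have h1' := isCoherent_inv.2 h1
  have h2' := isCoherent_inv.2 h2
  have h3' := isCoherent_inv.2 h3
  have h0 : IsCoherent s 1 := .inl isPos_one
  refine ⟨1, s, fun i j => ?_⟩
  fin_cases i <;> fin_cases j <;> simp_all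

end Sign

section Reduction

theorem ThetaGenerates.exists_eq_one {t : Fin 3 → FreeGroup (Fin 2)} (ht : ThetaGenerates t)
    (hf : ∀ i j, i ≠ j → firstLetter (t i) ≠ firstLetter (t j))
    (hl : ∀ i j, i ≠ j → firstLetter (t i)⁻¹ ≠ firstLetter (t j)⁻¹) : ∃ i, t i = 1 := by
  by_contra! h1
  rcases exists_thetaPath ht (of 0) with h | ⟨i, hi⟩
  · exact of_ne_one _ h
  · have := ((hi.norm_bound h1 hf hl).2 rfl).1
    simp at this

theorem exists_eq_letter {t : Bool → FreeGroup (Fin 2)} (hg : Subgroup.closure (Set.range t) = ⊤)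
    (ht : ∀ i, t i ≠ 1) (hc : NoCancel (t false) (t true)) (j : Fin 2) :
    ∃ i b, t i = mk [(j, b)] := by
  obtain ⟨i, hi⟩ := exists_altProd hg (of j)
  have hc' : ∀ i, NoCancel (t i) (t !i) := by
    rintro (_ | _)
    exacts [hc, hc.symm]
  rcases hi.norm_bound ht hc' with h | ⟨-, -, h | ⟨n, hn⟩⟩
  · exact absurd h (of_ne_one j)
  · simp at h
  · have h1 := congrArg (σ j) hn
    have h2 : σ j (t i ^ n) = n * σ j (t i) := by simp [σ]
    rw [h2] at h1
    have h3 : σ j (of j) = 1 := by simp [σ, expSum]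
    rw [h3] at h1
    rcases Int.isUnit_iff.1 (IsUnit.of_mul_eq_one _ h1.symm) with rfl | rfl
    · exact ⟨i, true, by simpa [of] using hn.symm⟩
    · refine ⟨i, false, ?_⟩
      have : t i = (of j)⁻¹ := by simp [hn]
      simp [this, of, inv_mk, invRev]

theorem thetaCoherent_of_noCancel {x y : FreeGroup (Fin 2)} (hg : Subgroup.closure {x, y} = ⊤)
    (hx : x ≠ 1) (hy : y ≠ 1) (hc : NoCancel x y) : ThetaCoherent ![x, y, 1] := by
  have hg' : Subgroup.closure (Set.range fun b : Bool => if b then y else x) = ⊤ := by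
    rw [← hg]
    congr 1
    ext
    simp [eq_comm]
  have H := exists_eq_letter hg' (by rintro (_ | _) <;> simpa) (by simpa using hc)
  obtain ⟨i, b, hi⟩ := H 0
  obtain ⟨j, c, hj⟩ := H 1
  have hij : i ≠ j := by
    rintro rfl
    have := congrArg toWord (hi.symm.trans hj)
    simp at this
  have key : ∀ (k : Fin 2) (b c : Bool), ThetaCoherent ![mk [(k, b)], mk [(1 - k, c)], 1] := by
    intro k b c
    have h1 : IsPos (fun l => if l = k then b else !c) (mk [(k, b)]) := by simp [isPos_letter]
    have h2 : IsPos (fun l => if l = k then b else !c) (mk [(1 - k, c)])⁻¹ := by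
      have : ∀ k : Fin 2, 1 - k ≠ k := by decide
      rw [← isPos_inv, inv_inv, isPos_letter]
      simp [this]
    exact thetaCoherent_of_isCoherent (.inl (h1.mul h2)) (.inl (by simpa using h1))
      (.inr (by simpa using h2))
  cases i <;> cases j <;> simp at hij hi hj
  · rw [hi, hj]
    exact key 0 b c
  · rw [hi, hj]
    exact key 1 c b

/-- If two edges of the theta graph start with the same letter, folding them shortens it. -/
theorem thetaCoherent_of_fold {t : Fin 3 → FreeGroup (Fin 2)} (ht : ThetaGenerates t)
    (IH : ∀ t' : Fin 3 → FreeGroup (Fin 2), ThetaGenerates t' →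
      ∑ i, norm (t' i) < ∑ i, norm (t i) → ThetaCoherent t')
    {i j : Fin 3} (hij : i ≠ j)
    (h : firstLetter (t i) = firstLetter (t j) ∨ firstLetter (t i)⁻¹ = firstLetter (t j)⁻¹) :
    ThetaCoherent t := by
  have sum_lt : ∀ t' : Fin 3 → FreeGroup (Fin 2), (∀ k, norm (t' k) ≤ norm (t k) + 1) →
      norm (t' i) + 1 = norm (t i) → norm (t' j) + 1 = norm (t j) →
      ∑ i, norm (t' i) < ∑ i, norm (t i) := by
    intro t' hk hi hj
    have h0 := hk 0
    have h1 := hk 1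
    have h2 := hk 2
    rw [Fin.sum_univ_three, Fin.sum_univ_three]
    fin_cases i <;> fin_cases j <;> simp at hij hi hj <;> omega
  rcases h with h | h
  · cases hl : firstLetter (t i) with
    | none =>
      refine absurd (ht.injective ?_) hij
      rw [firstLetter_eq_none.1 hl, firstLetter_eq_none.1 (h.symm.trans hl)]
    | some l =>
      refine ThetaCoherent.of_shift (mk [l])⁻¹ 1 (IH _ (ht.shift _ _) (sum_lt _ ?_ ?_ ?_))
      · intro k
        have := norm_mul_le (mk [l])⁻¹ (t k)
        rw [norm_inv_eq, norm_letter] at this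
        rw [mul_one]
        omega
      · simpa using norm_inv_letter_mul hl
      · simpa using norm_inv_letter_mul (h.symm.trans hl)
  · cases hl : firstLetter (t i)⁻¹ with
    | none =>
      refine absurd (ht.injective ?_) hij
      rw [inv_eq_one.1 (firstLetter_eq_none.1 hl),
        inv_eq_one.1 (firstLetter_eq_none.1 (h.symm.trans hl))]
    | some l =>
      refine ThetaCoherent.of_shift 1 (mk [l]) (IH _ (ht.shift _ _) (sum_lt _ ?_ ?_ ?_))
      · intro k
        have := norm_mul_le (t k) (mk [l])
        rw [norm_letter] at this
        rw [one_mul]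
        omega
      · simpa using norm_mul_letter hl
      · simpa using norm_mul_letter (h.symm.trans hl)

theorem thetaCoherent_of_isPos {s : Fin 2 → Bool} {x y z : FreeGroup (Fin 2)}
    (hx : IsPos s x) (hy : IsPos s y) (hz : IsPos s z⁻¹) (ht : ThetaGenerates ![x, y, z]) :
    ThetaCoherent ![x, y, z] := by
  induction hN : norm x + norm y using Nat.strong_induction_on generalizing x y z with
  | _ N ih =>
  by_cases hx1 : x = 1
  · subst hx1
    exact thetaCoherent_of_isCoherent (s := s) (.inr (by simpa using hy))
      (.inl (by simpa using hz)) (.inl (hy.mul hz))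
  by_cases hy1 : y = 1
  · subst hy1
    exact thetaCoherent_of_isCoherent (s := s) (.inl (by simpa using hx))
      (.inl (hx.mul hz)) (.inl (by simpa using hz))
  have shift_eq : ∀ g h, (fun i => g * ![x, y, z] i * h) = ![g * x * h, g * y * h, g * z * h] := by
    intro g h
    ext i
    fin_cases i <;> rfl
  by_cases hf : firstLetter x = firstLetter y
  · obtain ⟨l, hl⟩ := Option.ne_none_iff_exists'.1 (firstLetter_eq_none.not.2 hx1)
    have hl' := hf.symm.trans hl
    have n1 := norm_inv_letter_mul hl
    have n2 := norm_inv_letter_mul hl'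
    have ht' := ht.shift (mk [l])⁻¹ 1
    refine ThetaCoherent.of_shift (mk [l])⁻¹ 1 ?_
    rw [shift_eq] at ht' ⊢
    simp only [mul_one] at ht' ⊢
    refine ih _ ?_ (hx.of_firstLetter hl).2 (hy.of_firstLetter hl').2 ?_ ht' rfl
    · omega
    · simpa using hz.mul (hx.of_firstLetter hl).1
  by_cases hf' : firstLetter x⁻¹ = firstLetter y⁻¹
  · obtain ⟨l, hl⟩ := Option.ne_none_iff_exists'.1 (firstLetter_eq_none.not.2 (inv_ne_one.2 hx1))
    have hl' := hf'.symm.trans hl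
    have n1 := norm_mul_letter hl
    have n2 := norm_mul_letter hl'
    have ht' := ht.shift 1 (mk [l])
    refine ThetaCoherent.of_shift 1 (mk [l]) ?_
    rw [shift_eq] at ht' ⊢
    simp only [one_mul] at ht' ⊢
    refine ih _ ?_ (hx.of_firstLetter_inv hl).2 (hy.of_firstLetter_inv hl').2 ?_ ht' rfl
    · omega
    · simpa using (hx.of_firstLetter_inv hl).1.mul hz
  have hxy := hx.firstLetter_inv_ne hy hx1
  have hyx := hy.firstLetter_inv_ne hx hy1
  by_cases hz1 : z = 1
  · subst hz1
    exact thetaCoherent_of_noCancel (thetaGenerates_pair.1 ht) hx1 hy1 ⟨hf, hyx.symm, hxy, hf'⟩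
  · have hzx := hz.firstLetter_inv_ne hx (inv_ne_one.2 hz1)
    have hzy := hz.firstLetter_inv_ne hy (inv_ne_one.2 hz1)
    have hxz := hx.firstLetter_inv_ne hz hx1
    have hyz := hy.firstLetter_inv_ne hz hy1
    rw [inv_inv] at hzx hzy
    obtain ⟨i, hi⟩ := ht.exists_eq_one
      (by intro i j; fin_cases i <;> fin_cases j <;> simp <;>
        first | assumption | exact Ne.symm ‹_›)
      (by intro i j; fin_cases i <;> fin_cases j <;> simp <;>
        first | assumption | exact Ne.symm ‹_›)
    fin_cases i
    exacts [absurd hi hx1, absurd hi hy1, absurd hi hz1]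

theorem thetaCoherent_of_inv_right {x y : FreeGroup (Fin 2)} (hg : Subgroup.closure {x, y} = ⊤)
    (h : ThetaCoherent ![x, y⁻¹, 1]) : ThetaCoherent ![x, y, 1] := by
  obtain ⟨g, s, h⟩ := h
  have h1 : IsCoherent s (g * x * g⁻¹) := by simpa using h 0 2
  have h2 : IsCoherent s (g * y * g⁻¹) := by simpa using h 2 1
  have hg' := closure_pair_conj hg g
  suffices H : ThetaCoherent ![g * x * g⁻¹, g * y * g⁻¹, 1] by
    refine ThetaCoherent.of_shift g g⁻¹ ?_
    convert H using 1
    ext i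
    fin_cases i <;> simp
  generalize g * x * g⁻¹ = u at *
  generalize g * y * g⁻¹ = v at *
  rcases h1 with hu | hu <;> rcases h2 with hv | hv
  · exact thetaCoherent_of_isPos hu hv (by simpa using isPos_one) (thetaGenerates_pair.2 hg')
  · exact thetaCoherent_of_isCoherent (s := s) (.inl (hu.mul hv)) (.inl (by simpa using hu))
      (.inr (by simpa using hv))
  · refine thetaCoherent_of_isCoherent (s := s) (.inr ?_) (.inr (by simpa using hu))
      (.inl (by simpa using hv))
    simpa using hv.mul hu
  · rw [← isPos_inv, inv_inv] at hu hv
    exact thetaCoherent_of_isPos hu hv (by simpa using isPos_one) (thetaGenerates_pair.2 hg')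

/-- Every generating theta graph of the free group of rank two is sign-coherent. -/
theorem ThetaGenerates.thetaCoherent {t : Fin 3 → FreeGroup (Fin 2)} (ht : ThetaGenerates t) :
    ThetaCoherent t := by
  induction hN : ∑ i, norm (t i) using Nat.strong_induction_on generalizing t with
  | _ N ih =>
  subst hN
  have IH : ∀ t' : Fin 3 → FreeGroup (Fin 2), ThetaGenerates t' →
      ∑ i, norm (t' i) < ∑ i, norm (t i) → ThetaCoherent t' :=
    fun t' ht' hlt => ih _ hlt ht' rfl
  by_cases hfold : ∃ i j, i ≠ j ∧
      (firstLetter (t i) = firstLetter (t j) ∨ firstLetter (t i)⁻¹ = firstLetter (t j)⁻¹)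
  · obtain ⟨i, j, hij, h⟩ := hfold
    exact thetaCoherent_of_fold ht IH hij h
  push Not at hfold
  obtain ⟨k, hk⟩ := ht.exists_eq_one (fun i j hij => (hfold i j hij).1)
    (fun i j hij => (hfold i j hij).2)
  obtain ⟨x, y, hxy⟩ : ∃ x y, t ∘ Equiv.swap k 2 = ![x, y, 1] := by
    refine ⟨(t ∘ Equiv.swap k 2) 0, (t ∘ Equiv.swap k 2) 1, ?_⟩
    ext i
    fin_cases i <;> simp [hk]
  refine ThetaCoherent.of_comp (Equiv.swap k 2) ?_
  have hgen := ht.comp (Equiv.swap k 2)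
  have hsum : ∑ i, norm ((t ∘ Equiv.swap k 2) i) = ∑ i, norm (t i) :=
    Equiv.sum_comp (Equiv.swap k 2) fun i => norm (t i)
  have h01 := hfold (Equiv.swap k 2 0) (Equiv.swap k 2 1) (by simp)
  change firstLetter ((t ∘ Equiv.swap k 2) 0) ≠ firstLetter ((t ∘ Equiv.swap k 2) 1) ∧
    firstLetter ((t ∘ Equiv.swap k 2) 0)⁻¹ ≠ firstLetter ((t ∘ Equiv.swap k 2) 1)⁻¹ at h01
  rw [hxy] at hgen hsum h01 ⊢
  have hpair := thetaGenerates_pair.1 hgen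
  have hx1 : x ≠ 1 := fun h => absurd (hgen.injective (a₁ := 0) (a₂ := 2) (by simpa)) (by simp)
  have hy1 : y ≠ 1 := fun h => absurd (hgen.injective (a₁ := 1) (a₂ := 2) (by simpa)) (by simp)
  by_cases hc : firstLetter x ≠ firstLetter y⁻¹ ∧ firstLetter x⁻¹ ≠ firstLetter y
  · exact thetaCoherent_of_noCancel hpair hx1 hy1 ⟨h01.1, hc.1, hc.2, h01.2⟩
  · refine thetaCoherent_of_inv_right hpair ?_
    refine thetaCoherent_of_fold (i := 0) (j := 1)
      (thetaGenerates_pair.2 (closure_pair_inv_right hpair)) ?_ (by simp) ?_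
    · intro t' ht' hlt
      refine IH t' ht' ?_
      rw [← hsum]
      simpa [Fin.sum_univ_three] using hlt
    · rw [not_and_or, not_not, not_not] at hc
      simpa using hc

end Reduction

section Inner

theorem IsPos.norm_eq {s : Fin 2 → Bool} {g : FreeGroup (Fin 2)} (hg : IsPos s g) :
    (norm g : ℤ) = (if s 0 then σ 0 g else -σ 0 g) + (if s 1 then σ 1 g else -σ 1 g) := by
  have key : ∀ L : List (Fin 2 × Bool), (∀ l ∈ L, l.2 = s l.1) →
      (L.length : ℤ) = (if s 0 then σ 0 (mk L) else -σ 0 (mk L)) +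
        (if s 1 then σ 1 (mk L) else -σ 1 (mk L)) := by
    intro L hL
    induction L with
    | nil => simp [σ, ← one_eq_mk]
    | cons l L ih =>
      have ih' := ih fun l hl => hL l (List.mem_cons_of_mem _ hl)
      have hl := hL l (by simp)
      have hmul : ∀ i, σ i (mk (l :: L)) = σ i (mk [l]) + σ i (mk L) := by
        intro i
        rw [show mk (l :: L) = mk [l] * mk L by rw [mul_mk]; rfl]
        simp only [σ, _root_.map_mul, toAdd_mul]
      have hσ : ∀ i, σ i (mk [l]) = if l.1 = i then (if l.2 then 1 else -1) else 0 := by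
        intro i
        obtain ⟨a, b⟩ := l
        cases b <;> by_cases h : a = i <;> simp [σ, expSum, h]
      rw [hmul, hmul, hσ, hσ, hl, List.length_cons, Nat.cast_add, ih']
      obtain ⟨a, b⟩ := l
      fin_cases a <;> cases h0 : s 0 <;> cases h1 : s 1 <;> simp [h0, h1] <;> ring
  have := key g.toWord hg
  rwa [mk_toWord] at this

theorem σ_inv (i : Fin 2) (g : FreeGroup (Fin 2)) : σ i g⁻¹ = -σ i g := by simp [σ]

theorem IsCoherent.norm_le {s : Fin 2 → Bool} {g : FreeGroup (Fin 2)} (hg : IsCoherent s g) :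
    (norm g : ℤ) ≤ |σ 0 g| + |σ 1 g| := by
  have aux : ∀ g, IsPos s g → (norm g : ℤ) ≤ |σ 0 g| + |σ 1 g| := by
    intro g hg
    rw [hg.norm_eq]
    refine add_le_add ?_ ?_ <;> split
    exacts [le_abs_self _, neg_le_abs _, le_abs_self _, neg_le_abs _]
  rcases hg with hg | hg
  · exact aux g hg
  · have := aux _ hg
    rwa [norm_inv_eq, σ_inv, σ_inv, abs_neg, abs_neg] at this

theorem IsCoherent.eq_of {s : Fin 2 → Bool} {g : FreeGroup (Fin 2)} (hg : IsCoherent s g)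
    (j : Fin 2) (hσ : ∀ i, σ i g = if j = i then 1 else 0) : g = of j := by
  have h1 := hg.norm_le
  have h2 : |σ 0 g| + |σ 1 g| = 1 := by
    rw [hσ, hσ]
    fin_cases j <;> simp
  rw [h2] at h1
  obtain ⟨l, hl⟩ : ∃ l, g.toWord = [l] := by
    rw [← List.length_eq_one_iff]
    have : g ≠ 1 := by
      rintro rfl
      simpa [σ] using hσ j
    have := one_le_norm this
    have h3 : norm g = 1 := by omega
    exact h3
  obtain ⟨a, b⟩ := l
  have hg' : g = mk [(a, b)] := by rw [← hl, mk_toWord]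
  have := hσ j
  rw [hg'] at this ⊢
  by_cases haj : a = j
  · subst haj
    cases b
    · simp [σ, expSum] at this
    · rfl
  · cases b <;> simp [σ, expSum, haj] at this

/-- **Nielsen**: automorphisms of the free group of rank two which act trivially on the
abelianization are inner. -/
theorem exists_eq_conj_of_σ (φ : MulAut (FreeGroup (Fin 2)))
    (h : ∀ i j, σ i (φ (of j)) = if j = i then 1 else 0) : ∃ g, φ = MulAut.conj g := by
  have hgen : Subgroup.closure {φ (of 0), φ (of 1)} = ⊤ := by
    have h1 : Subgroup.closure (Set.range (of : Fin 2 → FreeGroup (Fin 2))) = ⊤ :=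
      closure_range_of _
    have h2 := congrArg (Subgroup.map φ.toMonoidHom) h1
    rw [MonoidHom.map_closure, Subgroup.map_top_of_surjective _ φ.surjective,
      ← Set.range_comp] at h2
    rw [← h2]
    congr 1
    ext
    simp [Fin.exists_fin_two, eq_comm]
  obtain ⟨g, s, hc⟩ := (thetaGenerates_pair.2 hgen).thetaCoherent
  have hconj : ∀ i j, σ i (g * φ (of j) * g⁻¹) = if j = i then 1 else 0 := by
    intro i j
    rw [← h i j]
    simp [σ]
  have hj : ∀ j, g * φ (of j) = of j * g := fun j => by
    rw [← mul_inv_eq_iff_eq_mul]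
    fin_cases j
    exacts [IsCoherent.eq_of (by simpa using hc 0 2) 0 (hconj · 0),
      IsCoherent.eq_of (by simpa using hc 1 2) 1 (hconj · 1)]
  refine ⟨g⁻¹, ?_⟩
  have : φ.toMonoidHom = (MulAut.conj g⁻¹).toMonoidHom := by
    refine ext_hom _ _ fun j => ?_
    change φ (of j) = g⁻¹ * of j * g⁻¹⁻¹
    rw [inv_inv, mul_assoc, ← hj, inv_mul_cancel_left]
  exact MulEquiv.toMonoidHom_injective this

end Inner

end FreeGroup

/-! ### Finite index and virtually cyclic groups -/

theorem Subgroup.finiteIndex_of_injOn_cosets {Γ X : Type*} [Group Γ] [Finite X] (H : Subgroup Γ)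
    (f : Γ → X) (hf : ∀ a b, f a = f b → a⁻¹ * b ∈ H) : H.FiniteIndex := by
  have : Function.Injective fun x : Γ ⧸ H => f x.out := by
    intro x y hxy
    rw [← x.out_eq', ← y.out_eq', QuotientGroup.eq]
    exact hf _ _ hxy
  have := Finite.of_injective _ this
  exact Subgroup.finiteIndex_of_finite_quotient

theorem Subgroup.finiteIndex_zpowers_zpow {Γ : Type*} [Group Γ] (c : Γ)
    [hc : (Subgroup.zpowers c).FiniteIndex] {m : ℤ} (hm : m ≠ 0) :
    (Subgroup.zpowers (c ^ m)).FiniteIndex := by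
  have hle : Subgroup.zpowers (c ^ m) ≤ Subgroup.zpowers c := by
    rw [Subgroup.zpowers_le]
    exact Subgroup.zpow_mem _ (Subgroup.mem_zpowers c) m
  have : NeZero m.natAbs := ⟨Int.natAbs_ne_zero.2 hm⟩
  choose e he using fun x : Subgroup.zpowers c => Subgroup.mem_zpowers_iff.1 x.2
  have h1 : ((Subgroup.zpowers (c ^ m)).subgroupOf (Subgroup.zpowers c)).FiniteIndex := by
    refine Subgroup.finiteIndex_of_injOn_cosets _ (fun x => (e x : ZMod m.natAbs)) fun x y hxy => ?_
    rw [ZMod.intCast_eq_intCast_iff, Int.modEq_iff_dvd, Int.natAbs_dvd] at hxy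
    obtain ⟨k, hk⟩ := hxy
    rw [Subgroup.mem_subgroupOf, Subgroup.mem_zpowers_iff]
    refine ⟨k, ?_⟩
    rw [← zpow_mul, ← hk, sub_eq_neg_add, zpow_add, zpow_neg, he, he]
    rfl
  rw [Subgroup.finiteIndex_iff, ← Subgroup.relIndex_mul_index hle]
  exact mul_ne_zero h1.index_ne_zero hc.index_ne_zero

theorem residuallyFinite_of_isCyclic_finiteIndex {Γ : Type*} [Group Γ] (H : Subgroup Γ)
    [hH : H.FiniteIndex] [IsCyclic H] : ResiduallyFinite Γ := by
  intro g hg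
  obtain ⟨c, rfl⟩ := Subgroup.isCyclic_iff_exists_zpowers_eq_top H |>.1 ‹_›
  by_cases hgc : g ∈ Subgroup.zpowers c
  · by_cases hfo : IsOfFinOrder c
    · have h1 : Finite (Subgroup.zpowers c) := finite_zpowers.2 hfo
      have : Finite Γ := (Subgroup.finite_iff_finite_and_finiteIndex _).2 ⟨h1, hH⟩
      exact ⟨⊥, inferInstance, inferInstance, by simpa using hg⟩
    · obtain ⟨k, rfl⟩ := Subgroup.mem_zpowers_iff.1 hgc
      have hk : k ≠ 0 := by
        rintro rfl
        simp at hg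
      have := Subgroup.finiteIndex_zpowers_zpow c (m := 2 * k) (by simpa using hk)
      refine ⟨(Subgroup.zpowers (c ^ (2 * k))).normalCore, inferInstance, inferInstance,
        fun h => ?_⟩
      obtain ⟨j, hj⟩ := Subgroup.mem_zpowers_iff.1 (Subgroup.normalCore_le _ h)
      rw [← zpow_mul] at hj
      have := injective_zpow_iff_not_isOfFinOrder.2 hfo hj
      have h2 : k * (2 * j - 1) = 0 := by linear_combination this
      rcases mul_eq_zero.1 h2 with h2 | h2 <;> omega
  · exact ⟨(Subgroup.zpowers c).normalCore, inferInstance, inferInstance,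
      fun h => hgc (Subgroup.normalCore_le _ h)⟩

/-- If a map `q` is trivial on the kernel of a map to `ℤ`, its range is cyclic. -/
theorem MonoidHom.isCyclic_range_of_ker_le {Γ Δ : Type*} [Group Γ] [Group Δ] (q : Γ →* Δ)
    (c : Γ →* Multiplicative ℤ) (h : c.ker ≤ q.ker) : IsCyclic q.range := by
  obtain ⟨⟨_, k, rfl⟩, hk⟩ := IsCyclic.exists_generator (α := c.range)
  refine ⟨⟨q k, k, rfl⟩, ?_⟩
  rintro ⟨_, g, rfl⟩
  obtain ⟨n, hn⟩ := Subgroup.mem_zpowers_iff.1 (hk ⟨c g, g, rfl⟩)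
  have hn' : c k ^ n = c g := congrArg Subtype.val hn
  refine Subgroup.mem_zpowers_iff.2 ⟨n, Subtype.ext ?_⟩
  have : (k ^ n)⁻¹ * g ∈ q.ker := h (by simp [MonoidHom.mem_ker, hn'])
  rw [MonoidHom.mem_ker, map_mul, map_inv, inv_mul_eq_one, map_zpow] at this
  exact this

theorem exists_finiteIndex_isCyclic_of_map {Γ Δ : Type*} [Group Γ] [Group Δ] (q : Γ →* Δ)
    (hq : q.range.FiniteIndex) (K : Subgroup Γ) (hK : K.FiniteIndex) (c : K →* Multiplicative ℤ)
    (h : ∀ k, c k = 1 → q k = 1) : ∃ H : Subgroup Δ, H.FiniteIndex ∧ IsCyclic H := by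
  refine ⟨K.map q, ?_, ?_⟩
  · rw [Subgroup.finiteIndex_iff, Subgroup.index_map]
    have : (K ⊔ q.ker).FiniteIndex := Subgroup.finiteIndex_of_le le_sup_left
    exact mul_ne_zero this.index_ne_zero hq.index_ne_zero
  · have := MonoidHom.isCyclic_range_of_ker_le (q.comp K.subtype) c fun k hk => h k hk
    rwa [MonoidHom.range_comp, Subgroup.range_subtype] at this

/-- A group acting on `ℤ²` by upper triangular matrices acts, up to finite index, through `ℤ`. -/
theorem exists_unipotent_of_triangular {Γ : Type*} [Group Γ] (T : Γ →* Matrix (Fin 2) (Fin 2) ℤ)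
    (hT : ∀ g, T g 1 0 = 0) : ∃ K : Subgroup Γ, K.FiniteIndex ∧ ∃ c : K →* Multiplicative ℤ,
      ∀ k, c k = 1 → T k = 1 := by
  have hmul : ∀ g h i j, T (g * h) i j = T g i 0 * T h 0 j + T g i 1 * T h 1 j := by
    intro g h i j
    rw [map_mul, Matrix.mul_apply, Fin.sum_univ_two]
  let d : Fin 2 → Γ →* ℤ := fun i =>
    { toFun g := T g i i
      map_one' := by simp
      map_mul' g h := by
        rw [hmul]
        fin_cases i <;> simp [hT] }
  let D : Γ →* (Fin 2 → ℤˣ) := MonoidHom.pi fun i => (d i).toHomUnits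
  have hD : ∀ (k : D.ker) i, T k i i = 1 := fun k i => by
    have := congrArg Units.val (congrFun (MonoidHom.mem_ker.1 k.2) i)
    exact this
  refine ⟨D.ker, inferInstance, ⟨⟨fun k => .ofAdd (T k 0 1), by simp⟩, fun g h => ?_⟩,
    fun k hk => ?_⟩
  · simp only [Subgroup.coe_mul, hmul, hD, ← ofAdd_add]
    congr 1
    ring
  · have h01 : T k 0 1 = 0 := hk
    ext i j
    fin_cases i <;> fin_cases j
    exacts [hD k 0, h01, hT k, hD k 1]

/-! ### The action of automorphisms on exponent sums -/

/-- Homomorphisms `τ` to `ℤ` dual to generators `x`. -/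
structure IsDualGenerators {Γ : Type*} [Group Γ] (x : Fin 2 → Γ)
    (τ : Fin 2 → Γ →* Multiplicative ℤ) : Prop where
  closure_eq_top : Subgroup.closure (Set.range x) = ⊤
  apply_eq : ∀ i j, (τ i (x j)).toAdd = if j = i then 1 else 0

namespace IsDualGenerators

variable {Γ : Type*} [Group Γ] {x : Fin 2 → Γ} {τ : Fin 2 → Γ →* Multiplicative ℤ}

theorem toAdd_apply (h : IsDualGenerators x τ) (f : Γ →* Multiplicative ℤ) (g : Γ) :
    (f g).toAdd = ∑ k, (f (x k)).toAdd * (τ k g).toAdd := by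
  have hg : g ∈ Subgroup.closure (Set.range x) := h.closure_eq_top ▸ Subgroup.mem_top g
  induction hg using Subgroup.closure_induction with
  | mem g hg =>
    obtain ⟨j, rfl⟩ := hg
    simp [h.apply_eq]
  | one => simp
  | mul g g' _ _ hg hg' => simp only [map_mul, toAdd_mul, hg, hg', mul_add, Finset.sum_add_distrib]
  | inv g _ hg => simp only [map_inv, toAdd_inv, hg, mul_neg, Finset.sum_neg_distrib]

/-- The matrix by which an automorphism acts on exponent sums. -/
def autMatrix (h : IsDualGenerators x τ) : MulAut Γ →* Matrix (Fin 2) (Fin 2) ℤ where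
  toFun α := .of fun i j => (τ i (α (x j))).toAdd
  map_one' := by
    ext i j
    simp [h.apply_eq, Matrix.one_apply, eq_comm]
  map_mul' α β := by
    ext i j
    rw [Matrix.mul_apply]
    exact h.toAdd_apply ((τ i).comp α.toMonoidHom) (β (x j))

theorem autMatrix_apply (h : IsDualGenerators x τ) (α : MulAut Γ) (i j : Fin 2) :
    h.autMatrix α i j = (τ i (α (x j))).toAdd := rfl

theorem toAdd_apply_aut (h : IsDualGenerators x τ) (α : MulAut Γ) (i : Fin 2) (g : Γ) :
    (τ i (α g)).toAdd = ∑ k, h.autMatrix α i k * (τ k g).toAdd :=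
  h.toAdd_apply ((τ i).comp α.toMonoidHom) g

theorem autMatrix_conj (h : IsDualGenerators x τ) (g : Γ) : h.autMatrix (MulAut.conj g) = 1 := by
  rw [← map_one h.autMatrix]
  ext i j
  simp [autMatrix_apply]

/-- The action of outer automorphisms on exponent sums. -/
def outMatrix (h : IsDualGenerators x τ) : Out Γ →* (Matrix (Fin 2) (Fin 2) ℤ)ˣ :=
  QuotientGroup.lift (innAut Γ) h.autMatrix.toHomUnits <| by
    rintro _ ⟨g, rfl⟩
    exact Units.ext (h.autMatrix_conj g)

end IsDualGenerators

theorem exists_finite_quotient_of_map_ne_one {Γ : Type*} [Group Γ] {ι : Type*} [Fintype ι]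
    [DecidableEq ι] (ρ : Γ →* (Matrix ι ι ℤ)ˣ) {g : Γ} (hg : ρ g ≠ 1) :
    ∃ N : Subgroup Γ, N.Normal ∧ Finite (Γ ⧸ N) ∧ g ∉ N := by
  obtain ⟨i, j, hij⟩ : ∃ i j, (ρ g).val i j - (1 : Matrix ι ι ℤ) i j ≠ 0 := by
    by_contra! h
    exact hg (Units.ext (Matrix.ext fun i j => sub_eq_zero.1 (h i j)))
  generalize hd : (ρ g).val i j - (1 : Matrix ι ι ℤ) i j = d at hij
  let r : Matrix ι ι ℤ →+* Matrix ι ι (ZMod (d.natAbs + 1)) := (Int.castRingHom _).mapMatrix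
  let f : Γ →* (Matrix ι ι (ZMod (d.natAbs + 1)))ˣ := (Units.map r.toMonoidHom).comp ρ
  refine ⟨f.ker, inferInstance, inferInstance, fun h => ?_⟩
  have h1 : r (ρ g).val = r 1 := by
    rw [map_one]
    exact congrArg Units.val (MonoidHom.mem_ker.1 h)
  have h2 : (((ρ g).val i j : ℤ) : ZMod (d.natAbs + 1)) = ((1 : Matrix ι ι ℤ) i j : ℤ) :=
    congrFun (congrFun h1 i) j
  rw [← sub_eq_zero, ← Int.cast_sub, hd, ZMod.intCast_zmod_eq_zero_iff_dvd] at h2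
  have := Int.le_of_dvd (abs_pos.2 hij) ((dvd_abs _ _).2 h2)
  rw [Int.abs_eq_natAbs] at this
  omega

/-! ### Nielsen equivalence and automorphisms -/

namespace NielsenEquiv

variable {G : Type*} [Group G] {n : ℕ} {X Y Z : Fin n → G}

theorem iff_exists_comp : NielsenEquiv Y Z ↔ ∃ φ : MulAut (FreeGroup (Fin n)),
    (FreeGroup.lift Y).comp φ.toMonoidHom = FreeGroup.lift Z :=
  exists_congr fun φ => ⟨fun h => FreeGroup.ext_hom _ _ fun i => by simpa using h i,
    fun h i => by simpa using DFunLike.congr_fun h (FreeGroup.of i)⟩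

theorem refl (Y : Fin n → G) : NielsenEquiv Y Y := ⟨.refl _, fun i => by simp⟩

theorem symm (h : NielsenEquiv Y Z) : NielsenEquiv Z Y := by
  rw [iff_exists_comp] at h ⊢
  obtain ⟨φ, hφ⟩ := h
  refine ⟨φ⁻¹, MonoidHom.ext fun w => ?_⟩
  rw [← hφ]
  simp

theorem trans (h : NielsenEquiv X Y) (h' : NielsenEquiv Y Z) : NielsenEquiv X Z := by
  rw [iff_exists_comp] at h h' ⊢
  obtain ⟨φ, hφ⟩ := h
  obtain ⟨ψ, hψ⟩ := h'
  refine ⟨φ * ψ, ?_⟩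
  rw [← hψ, ← hφ]
  rfl

end NielsenEquiv

/-- Pairs of an automorphism of the free group and an automorphism of the presented group which it
induces. -/
def inducedPairs (rels : Set (FreeGroup (Fin 2))) :
    Subgroup (MulAut (FreeGroup (Fin 2)) × MulAut (PresentedGroup rels)) where
  carrier := {p | ∀ w, p.2 (PresentedGroup.mk rels w) = PresentedGroup.mk rels (p.1 w)}
  one_mem' _ := rfl
  mul_mem' {p q} hp hq w := by
    change p.2 (q.2 _) = _
    rw [hq, hp]
    rfl
  inv_mem' {p} hp w := by
    change p.2⁻¹ _ = _
    rw [MulAut.inv_apply, MulEquiv.symm_apply_eq, hp]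
    simp

section PresentedGroup

variable {rels : Set (FreeGroup (Fin 2))}

theorem mem_inducedPairs {p : MulAut (FreeGroup (Fin 2)) × MulAut (PresentedGroup rels)} :
    p ∈ inducedPairs rels ↔
      ∀ w, p.2 (PresentedGroup.mk rels w) = PresentedGroup.mk rels (p.1 w) := Iff.rfl

/-- The outer class of the automorphism of the presented group in an induced pair. -/
def inducedOut (rels : Set (FreeGroup (Fin 2))) :
    inducedPairs rels →* Out (PresentedGroup rels) :=
  (QuotientGroup.mk' (innAut _)).comp ((MonoidHom.snd _ _).comp (inducedPairs rels).subtype)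

theorem finiteIndex_range_inducedOut
    (hfin : Finite (Quot (fun (Y Z : {Y : Fin 2 → PresentedGroup rels //
      SameTSystem (fun i => (PresentedGroup.of i : PresentedGroup rels)) Y}) =>
      NielsenEquiv Y.1 Z.1))) : (inducedOut rels).range.FiniteIndex := by
  let V := {Y : Fin 2 → PresentedGroup rels //
    SameTSystem (fun i => (PresentedGroup.of i : PresentedGroup rels)) Y}
  let R : V → V → Prop := fun Y Z => NielsenEquiv Y.1 Z.1
  have hequiv : Equivalence R := ⟨fun _ => .refl _, .symm, .trans⟩
  refine Subgroup.finiteIndex_of_injOn_cosets (X := Quot R) _ (fun g => Quot.mk _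
    ⟨fun i => g.out (PresentedGroup.of i), g.out, NielsenEquiv.refl _⟩) fun a b hab => ?_
  obtain ⟨φ, hφ⟩ :=
    NielsenEquiv.iff_exists_comp.1 (hequiv.eqvGen_iff.1 (Quot.eqvGen_exact hab))
  have hlift : ∀ (α : MulAut (PresentedGroup rels)) w,
      FreeGroup.lift (fun i => α (PresentedGroup.of i)) w = α (PresentedGroup.mk rels w) := by
    intro α w
    refine DFunLike.congr_fun (f := FreeGroup.lift (fun i => α (PresentedGroup.of i)))
      (g := α.toMonoidHom.comp (PresentedGroup.mk rels)) (FreeGroup.ext_hom _ _ fun i => ?_) w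
    simp [PresentedGroup.of]
  have hmem : (φ, a.out⁻¹ * b.out) ∈ inducedPairs rels := by
    intro w
    have := DFunLike.congr_fun hφ w
    rw [MonoidHom.comp_apply, hlift, hlift] at this
    change a.out⁻¹ (b.out _) = _
    rw [← this]
    simp
  refine ⟨⟨_, hmem⟩, ?_⟩
  change QuotientGroup.mk (s := innAut (PresentedGroup rels)) (a.out⁻¹ * b.out) = _
  rw [QuotientGroup.mk_mul, QuotientGroup.mk_inv, QuotientGroup.out_eq', QuotientGroup.out_eq']

theorem isDualGenerators_expSum : IsDualGenerators (FreeGroup.of (α := Fin 2)) expSum where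
  closure_eq_top := FreeGroup.closure_range_of _
  apply_eq i j := by simp [expSum]

theorem inducedOut_eq_one_of_autMatrix (p : inducedPairs rels)
    (h : isDualGenerators_expSum.autMatrix p.1.1 = 1) : inducedOut rels p = 1 := by
  obtain ⟨g, hg⟩ := FreeGroup.exists_eq_conj_of_σ p.1.1 fun i j => by
    have := congrFun (congrFun h i) j
    rw [Matrix.one_apply] at this
    simp only [eq_comm (a := i)] at this
    exact this
  refine (QuotientGroup.eq_one_iff _).2 ⟨PresentedGroup.mk rels g, ?_⟩
  ext w
  obtain ⟨w, rfl⟩ := PresentedGroup.mk_surjective rels w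
  change _ = p.1.2 _
  rw [mem_inducedPairs.1 p.2, hg]
  simp

/-! ### Exponent sums of relations -/

theorem map_eq_zpow_mul_zpow {A : Type*} [CommGroup A] (f : FreeGroup (Fin 2) →* A)
    (w : FreeGroup (Fin 2)) : f w = f (.of 0) ^ σ 0 w * f (.of 1) ^ σ 1 w := by
  refine DFunLike.congr_fun (f := f) (g := (zpowersHom A (f (.of 0))).comp (expSum 0) *
    (zpowersHom A (f (.of 1))).comp (expSum 1)) (FreeGroup.ext_hom _ _ fun i => ?_) w
  fin_cases i <;> simp [expSum]

theorem mem_commutator_iff_σ {w : FreeGroup (Fin 2)} :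
    w ∈ commutator (FreeGroup (Fin 2)) ↔ ∀ i, σ i w = 0 := by
  constructor
  · intro hw i
    exact congrArg Multiplicative.toAdd
      (MonoidHom.mem_ker.1 (Abelianization.commutator_subset_ker (expSum i) hw))
  · intro h
    rw [← Abelianization.ker_of, MonoidHom.mem_ker, map_eq_zpow_mul_zpow, h, h]
    simp

theorem exists_isDualGenerators_of_subset_commutator
    (h : rels ⊆ ↑(commutator (FreeGroup (Fin 2)))) :
    ∃ τ, IsDualGenerators (PresentedGroup.of (rels := rels)) τ ∧
      ∀ i w, τ i (PresentedGroup.mk rels w) = expSum i w := by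
  have hr : ∀ i, ∀ r ∈ rels, expSum i r = 1 := fun i r hr => mem_commutator_iff_σ.1 (h hr) i
  refine ⟨fun i => PresentedGroup.toGroup (hr i), ⟨PresentedGroup.closure_range_of _,
    fun i j => isDualGenerators_expSum.apply_eq i j⟩, fun i w => rfl⟩

theorem residuallyFinite_out_of_subset_commutator (h : rels ⊆ ↑(commutator (FreeGroup (Fin 2))))
    (hindex : (inducedOut rels).range.FiniteIndex) :
    ResiduallyFinite (Out (PresentedGroup rels)) := by
  obtain ⟨τ, hdual, hτ⟩ := exists_isDualGenerators_of_subset_commutator h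
  intro g hg
  by_cases hgr : g ∈ (inducedOut rels).range
  · obtain ⟨p, rfl⟩ := hgr
    refine exists_finite_quotient_of_map_ne_one hdual.outMatrix fun h1 =>
      hg (inducedOut_eq_one_of_autMatrix p ?_)
    have h2 : hdual.autMatrix p.1.2 = 1 := congrArg Units.val h1
    rw [← h2]
    ext i j
    rw [IsDualGenerators.autMatrix_apply, IsDualGenerators.autMatrix_apply, ← hτ,
      ← mem_inducedPairs.1 p.2]
    rfl
  · exact ⟨(inducedOut rels).range.normalCore, inferInstance, inferInstance,
      fun h => hgr (Subgroup.normalCore_le _ h)⟩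

theorem zpow_eq_one_of_zpow_mul_zpow {A : Type*} [CommGroup A] {a b : A} {k l m n : ℤ}
    (h : a ^ k * b ^ l = 1) (h' : a ^ m * b ^ n = 1) : a ^ (k * n - l * m) = 1 := by
  rw [mul_eq_one_iff_eq_inv, ← zpow_neg] at h h'
  rw [zpow_sub, mul_comm l m, zpow_mul, zpow_mul, h, h', ← zpow_mul, ← zpow_mul]
  rw [mul_inv_eq_one]
  congr 1
  ring

theorem σ_mul_eq_of_mem_ker (hab : Infinite (Abelianization (PresentedGroup rels)))
    {u w : FreeGroup (Fin 2)} (hu : PresentedGroup.mk rels u = 1)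
    (hw : PresentedGroup.mk rels w = 1) : σ 0 u * σ 1 w = σ 1 u * σ 0 w := by
  by_contra hne
  let f : FreeGroup (Fin 2) →* Abelianization (PresentedGroup rels) :=
    Abelianization.of.comp (PresentedGroup.mk rels)
  have hf : Function.Surjective f :=
    (QuotientGroup.mk'_surjective _).comp (PresentedGroup.mk_surjective rels)
  have hfu : f (.of 0) ^ σ 0 u * f (.of 1) ^ σ 1 u = 1 := by
    rw [← map_eq_zpow_mul_zpow, MonoidHom.comp_apply, hu, map_one]
  have hfw : f (.of 0) ^ σ 0 w * f (.of 1) ^ σ 1 w = 1 := by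
    rw [← map_eq_zpow_mul_zpow, MonoidHom.comp_apply, hw, map_one]
  have ha := zpow_eq_one_of_zpow_mul_zpow hfu hfw
  have hb := zpow_eq_one_of_zpow_mul_zpow ((mul_comm _ _).trans hfu) ((mul_comm _ _).trans hfw)
  have htors : IsMulTorsion (Abelianization (PresentedGroup rels)) := by
    intro g
    obtain ⟨v, rfl⟩ := hf g
    refine isOfFinOrder_iff_zpow_eq_one.2 ⟨σ 0 u * σ 1 w - σ 1 u * σ 0 w, sub_ne_zero.2 hne, ?_⟩
    rw [map_eq_zpow_mul_zpow, mul_zpow, zpow_comm, ha, ← neg_sub, zpow_neg (_ ^ _), zpow_comm, hb]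
    simp
  have : Group.FG (Abelianization (PresentedGroup rels)) := Group.fg_of_surjective hf
  have := CommGroup.finite_of_fg_isMulTorsion _ htors
  exact not_finite (Abelianization (PresentedGroup rels))

/-- The relations of a presentation with infinite abelianization, one of which is not in the
commutator subgroup, have exponent sums proportional to a primitive vector. -/
theorem exists_primitive_σ (hab : Infinite (Abelianization (PresentedGroup rels)))
    (h : ¬ rels ⊆ ↑(commutator (FreeGroup (Fin 2)))) :
    ∃ p q s t d : ℤ, p * s + q * t = 1 ∧ d ≠ 0 ∧
      (∃ w, PresentedGroup.mk rels w = 1 ∧ σ 0 w = d * p ∧ σ 1 w = d * q) ∧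
      ∀ w, PresentedGroup.mk rels w = 1 → p * σ 1 w = q * σ 0 w := by
  obtain ⟨r, hr, hrc⟩ := Set.not_subset.1 h
  have hr1 : PresentedGroup.mk rels r = 1 := PresentedGroup.one_of_mem hr
  have hpos : 0 < Int.gcd (σ 0 r) (σ 1 r) := by
    rw [Int.gcd_pos_iff]
    by_contra! h0
    exact hrc (mem_commutator_iff_σ.2 (Fin.forall_fin_two.2 h0))
  obtain ⟨p, q, hpq, hp, hq⟩ := Int.exists_gcd_one hpos
  have hd : (Int.gcd (σ 0 r) (σ 1 r) : ℤ) ≠ 0 := by exact_mod_cast hpos.ne'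
  generalize (Int.gcd (σ 0 r) (σ 1 r) : ℤ) = d at *
  refine ⟨p, q, p.gcdA q, p.gcdB q, d, ?_, hd, ⟨r, hr1, by rw [hp, mul_comm], by rw [hq, mul_comm]⟩,
    fun w hw => mul_left_cancel₀ hd ?_⟩
  · rw [← Int.gcd_eq_gcd_ab, hpq]
    rfl
  · have := σ_mul_eq_of_mem_ker hab hr1 hw
    rw [hp, hq] at this
    linear_combination this

theorem exists_isCyclic_finiteIndex_out (hab : Infinite (Abelianization (PresentedGroup rels)))
    (h : ¬ rels ⊆ ↑(commutator (FreeGroup (Fin 2))))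
    (hindex : (inducedOut rels).range.FiniteIndex) :
    ∃ H : Subgroup (Out (PresentedGroup rels)), H.FiniteIndex ∧ IsCyclic H := by
  obtain ⟨p, q, s, t, d, hst, hd, ⟨w, hw, hw0, hw1⟩, hpq⟩ := exists_primitive_σ hab h
  let P : Matrix (Fin 2) (Fin 2) ℤ := !![p, -t; q, s]
  let Q : Matrix (Fin 2) (Fin 2) ℤ := !![s, t; -q, p]
  have hPQ : P * Q = 1 := by
    ext i j
    fin_cases i <;> fin_cases j <;> simp [P, Q] <;> first | ring1 | linear_combination hst
  have hQP : Q * P = 1 := mul_eq_one_comm.1 hPQ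
  let M : inducedPairs rels →* Matrix (Fin 2) (Fin 2) ℤ :=
    isDualGenerators_expSum.autMatrix.comp ((MonoidHom.fst _ _).comp (inducedPairs rels).subtype)
  let T : inducedPairs rels →* Matrix (Fin 2) (Fin 2) ℤ :=
    { toFun e := Q * M e * P
      map_one' := by rw [map_one, mul_one, hQP]
      map_mul' e e' := by
        calc Q * M (e * e') * P = Q * M e * 1 * M e' * P := by
              simp only [map_mul, mul_assoc, mul_one]
          _ = _ := by simp only [← hPQ, mul_assoc] }
  have hT : ∀ e, T e = Q * M e * P := fun e => rfl
  have hT10 : ∀ e, T e 1 0 = 0 := by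
    intro e
    have hφ : PresentedGroup.mk rels (e.1.1 w) = 1 := by
      rw [← mem_inducedPairs.1 e.2, hw, map_one]
    have hσ : ∀ i, σ i (e.1.1 w) = M e i 0 * (d * p) + M e i 1 * (d * q) := by
      intro i
      rw [← hw0, ← hw1]
      have := isDualGenerators_expSum.toAdd_apply_aut e.1.1 i w
      rwa [Fin.sum_univ_two] at this
    have := hpq _ hφ
    rw [hσ, hσ] at this
    refine mul_left_cancel₀ hd ?_
    simp only [hT, Matrix.mul_apply, Fin.sum_univ_two]
    simp [P, Q, -mul_eq_zero]
    linear_combination this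
  obtain ⟨K, hK, c, hc⟩ := exists_unipotent_of_triangular T hT10
  refine exists_finiteIndex_isCyclic_of_map (inducedOut rels) hindex K hK c fun k hk =>
    inducedOut_eq_one_of_autMatrix k.1 ?_
  have h1 : Q * M k * P = 1 := hc k hk
  change M k = 1
  calc M k = P * Q * M k * (P * Q) := by rw [hPQ, one_mul, mul_one]
    _ = P * (Q * M k * P) * Q := by simp only [mul_assoc]
    _ = 1 := by rw [h1, mul_one, hPQ]

end PresentedGroup

theorem statement_19 (rels : Set (FreeGroup (Fin 2)))
    (hab : Infinite (Abelianization (PresentedGroup rels)))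
    (hfin : Finite (Quot (fun (Y Z : {Y : Fin 2 → PresentedGroup rels //
      SameTSystem (fun i => (PresentedGroup.of i : PresentedGroup rels)) Y}) =>
      NielsenEquiv Y.1 Z.1))) :
    ResiduallyFinite (Out (PresentedGroup rels)) ∧
      (¬ rels ⊆ ↑(commutator (FreeGroup (Fin 2))) →
        ∃ H : Subgroup (Out (PresentedGroup rels)), H.FiniteIndex ∧ IsCyclic H) := by
  have hindex := finiteIndex_range_inducedOut hfin
  refine ⟨?_, fun h => exists_isCyclic_finiteIndex_out hab h hindex⟩
  by_cases h : rels ⊆ ↑(commutator (FreeGroup (Fin 2)))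
  · exact residuallyFinite_out_of_subset_commutator h hindex
  · obtain ⟨H, _, _⟩ := exists_isCyclic_finiteIndex_out hab h hindex
    exact residuallyFinite_of_isCyclic_finiteIndex H
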